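/- arXiv:1303.0106 — 5 statements merged into one kernel-verified Lean document; each statement's English description precedes it below -/
import Mathlib

section
/- Let r ≥ 1 and 0 ≤ p ≤ r, and let A be a p×r matrix of real numbers with A(k,ℓ) ≥ 0 for all k,ℓ and A(k,k) = 1 for all 1 ≤ k ≤ p. Set b_k(λ) = Σ_{ℓ=1}^r A(k,ℓ)·λ_ℓ, γ(λ) = Π_{k=1}^p λ_k / b_k(λ), and δ_k = 1 if A(k,ℓ) = 0 for all ℓ > k and δ_k = 0 otherwise. Then for every sequence λ^{(m)} = (λ^{(m)}_1,…,λ^{(m)}_r) ∈ ℂ^r such that λ^{(m)}_j ≠ 0 for all m and all j, and λ^{(m)}_j / λ^{(m)}_{j+1} → 0 as m → ∞ for every 1 ≤ j ≤ r−1, the following hold: (i) for all sufficiently large m one has b_k(λ^{(m)}) ≠ 0 for every 1 ≤ k ≤ p; (ii) γ(λ^{(m)}) → Π_{k=1}^p δ_k as m → ∞. -/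
/-!
In a sum `∑ l, a l * L l` the term of largest index `n` with `a n ≠ 0` dominates all the others, so
the sum is asymptotically equivalent to `a n * L n`. Hence `L k / ∑ l, a l * L l` behaves like
`L k / (a n * L n)`: when `a k ≠ 0`, so that `k ≤ n`, it tends to `(a k)⁻¹` if `n = k` and to `0` if
`k < n`.
-/

open Filter Asymptotics
open scoped Topology

/-- A family of functions indexed by an ordered type is an asymptotic scale along `F` if every
member is negligible compared with each member of larger index. It encodes the condition
`λ_j / λ_{j+1} → 0` on the coordinates of a sequence; note that the functions grow with the index,
as opposed to the convention of asymptotic expansions. -/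
def IsAsymptoticScale {ι α 𝕜 : Type*} [Preorder ι] [Norm 𝕜] (F : Filter α) (u : ι → α → 𝕜) :
    Prop :=
  ∀ ⦃i j⦄, i < j → u i =o[F] u j

namespace IsAsymptoticScale

theorem of_covBy {ι α E : Type*} [Preorder ι] [LocallyFiniteOrder ι] [Norm E]
    {F : Filter α} {u : ι → α → E} (h : ∀ ⦃i j⦄, i ⋖ j → u i =o[F] u j) :
    IsAsymptoticScale F u := by
  intro i j hij
  induction transGen_covBy_of_lt hij with
  | single hj => exact h hj
  | tail hij' hj ih => exact (ih (lt_iff_transGen_covBy.2 hij')).trans (h hj)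

variable {ι α 𝕜 : Type*} [NormedField 𝕜] {F : Filter α}

theorem of_tendsto_div_succ {r : ℕ} {u : Fin r → α → 𝕜} (hu0 : ∀ j, ∀ᶠ x in F, u j x ≠ 0)
    (hu : ∀ (j : ℕ) (hj : j + 1 < r),
      Tendsto (fun x => u ⟨j, by omega⟩ x / u ⟨j + 1, hj⟩ x) F (𝓝 0)) :
    IsAsymptoticScale F u := by
  refine of_covBy fun ⟨i, hi⟩ ⟨j, hj⟩ hij => ?_
  obtain rfl : i + 1 = j := by simpa using hij
  exact (isLittleO_iff_tendsto' ((hu0 _).mono fun _ hx h => absurd h hx)).2 (hu i hj)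

variable [LinearOrder ι] [Fintype ι] {u : ι → α → 𝕜}

theorem isEquivalent_sum (hu : IsAsymptoticScale F u) {a : ι → 𝕜} {n : ι} (hn : a n ≠ 0)
    (ha : ∀ l, n < l → a l = 0) :
    (fun x => ∑ l, a l * u l x) ~[F] fun x => a n * u n x := by
  have hrest : (fun x => ∑ l ∈ Finset.univ.erase n, a l * u l x) =o[F] fun x => a n * u n x := by
    refine IsLittleO.fun_sum fun l hl => ?_
    rcases (Finset.ne_of_mem_erase hl).lt_or_gt with hln | hnl
    · exact ((hu hln).const_mul_left _).trans_isBigO ((isBigO_refl _ _).const_mul_right hn)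
    · simpa only [ha l hnl, zero_mul] using isLittleO_zero _ _
  refine (IsEquivalent.refl.add_isLittleO hrest).congr_left (.of_forall fun x => ?_)
  exact Finset.add_sum_erase _ (fun l => a l * u l x) (Finset.mem_univ n)

theorem exists_isEquivalent_sum (hu : IsAsymptoticScale F u) {a : ι → 𝕜} {i : ι} (hi : a i ≠ 0) :
    ∃ n, i ≤ n ∧ a n ≠ 0 ∧ (fun x => ∑ l, a l * u l x) ~[F] fun x => a n * u n x := by
  obtain ⟨n, hin, hn⟩ := {l | a l ≠ 0}.toFinite.exists_le_maximal hi
  exact ⟨n, hin, hn.prop, hu.isEquivalent_sum hn.prop fun l hl => not_not.1 (hn.not_prop_of_gt hl)⟩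

theorem eventually_sum_ne_zero (hu : IsAsymptoticScale F u) (hu0 : ∀ i, ∀ᶠ x in F, u i x ≠ 0)
    {a : ι → 𝕜} {i : ι} (hi : a i ≠ 0) : ∀ᶠ x in F, ∑ l, a l * u l x ≠ 0 := by
  obtain ⟨n, -, hn, hequiv⟩ := hu.exists_isEquivalent_sum hi
  filter_upwards [hequiv.isBigO_symm.eq_zero_imp, hu0 n] with x hx hux hsum
  exact mul_ne_zero hn hux (hx hsum)

theorem tendsto_div_sum_inv (hu : IsAsymptoticScale F u) {a : ι → 𝕜} {k : ι}
    (huk : ∀ᶠ x in F, u k x ≠ 0) (hk : a k ≠ 0) (ha : ∀ l, k < l → a l = 0) :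
    Tendsto (fun x => u k x / ∑ l, a l * u l x) F (𝓝 (a k)⁻¹) := by
  have hequiv : (fun x => u k x / ∑ l, a l * u l x) ~[F] fun x => u k x / (a k * u k x) :=
    IsEquivalent.refl.div (hu.isEquivalent_sum hk ha)
  refine hequiv.symm.tendsto_nhds (tendsto_const_nhds.congr' ?_)
  filter_upwards [huk] with x hx
  exact (div_mul_cancel_right₀ hx (a k)).symm

theorem tendsto_div_sum_zero (hu : IsAsymptoticScale F u) {a : ι → 𝕜} {k i : ι} (hki : k < i)
    (hi : a i ≠ 0) : Tendsto (fun x => u k x / ∑ l, a l * u l x) F (𝓝 0) := by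
  obtain ⟨n, hin, hn, hequiv⟩ := hu.exists_isEquivalent_sum hi
  have hkn : u k =o[F] fun x => a n * u n x :=
    (hu (hki.trans_le hin)).trans_isBigO ((isBigO_refl _ _).const_mul_right hn)
  exact (hkn.trans_isEquivalent hequiv.symm).tendsto_div_nhds_zero

end IsAsymptoticScale

open Classical in
theorem stmt0_general {ι κ α 𝕜 : Type*} [LinearOrder ι] [Fintype ι] [Fintype κ] [NormedField 𝕜]
    {F : Filter α} {u : ι → α → 𝕜} (hu : IsAsymptoticScale F u)
    (hu0 : ∀ i, ∀ᶠ x in F, u i x ≠ 0) (A : κ → ι → 𝕜) (e : κ → ι) (hA : ∀ k, A k (e k) ≠ 0) :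
    (∀ᶠ x in F, ∀ k, ∑ l, A k l * u l x ≠ 0) ∧
    Tendsto (fun x => ∏ k, u (e k) x / ∑ l, A k l * u l x) F
      (𝓝 (∏ k, if ∀ l, e k < l → A k l = 0 then (A k (e k))⁻¹ else 0)) := by
  refine ⟨eventually_all.2 fun k => hu.eventually_sum_ne_zero hu0 (hA k),
    tendsto_finsetProd _ fun k _ => ?_⟩
  split_ifs with htop
  · exact hu.tendsto_div_sum_inv (hu0 _) (hA k) htop
  · push Not at htop
    obtain ⟨l, hkl, hl⟩ := htop
    exact hu.tendsto_div_sum_zero hkl hl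

open Filter Finset in
/-- iterated-limit behaviour of the rational function
`γ(λ) = ∏_{k=1}^p λ_k / b_k(λ)` with `b_k(λ) = ∑_{ℓ=1}^r A(k,ℓ)λ_ℓ`,
along sequences with `λ_j/λ_{j+1} → 0`. -/
theorem stmt0 (r p : ℕ) (hr : 1 ≤ r) (hpr : p ≤ r)
    (A : Fin p → Fin r → ℝ)
    (hA : ∀ k l, 0 ≤ A k l)
    (hdiag : ∀ k : Fin p, A k (Fin.castLE hpr k) = 1)
    (L : ℕ → Fin r → ℂ)
    (hL0 : ∀ m j, L m j ≠ 0)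
    (hLrat : ∀ (j : ℕ) (hj : j + 1 < r),
      Tendsto (fun m => L m ⟨j, by omega⟩ / L m ⟨j + 1, hj⟩) atTop (nhds 0)) :
    (∀ᶠ m in atTop, ∀ k : Fin p, (∑ l, (A k l : ℂ) * L m l) ≠ 0) ∧
    Tendsto
      (fun m => ∏ k : Fin p,
        L m (Fin.castLE hpr k) / ∑ l, (A k l : ℂ) * L m l)
      atTop
      (nhds (∏ k : Fin p,
        if ∀ l : Fin r, (k : ℕ) < (l : ℕ) → A k l = 0 then (1 : ℂ) else 0)) := by
  have hL (j : Fin r) : ∀ᶠ m in atTop, L m j ≠ 0 := .of_forall fun m => hL0 m j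
  simpa [hdiag, Fin.lt_def] using stmt0_general (.of_tendsto_div_succ hL hLrat) hL
    (fun k l => (A k l : ℂ)) (Fin.castLE hpr) (by simp [hdiag])
end

section
/- Let r ≥ 1, let 1 ≤ k ≤ r, and let a_1,…,a_r be nonnegative real numbers with a_k = 1. Define N, D : ℂ^{r−1} → ℂ by N(τ) = Π_{i=k}^{r−1} τ_i and D(τ) = Σ_{j=1}^{r} a_j · Π_{i=j}^{r−1} τ_i (where an empty product equals 1, so the j = r term is the constant a_r). Then there exist ε > 0 and a function g : ℂ^{r−1} → ℂ that is analytic on the open ball of radius ε centered at 0 such that g(τ)·D(τ) = N(τ) for all τ in that ball. -/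
/-!
Index from `0`, put `n = r - 1`, and let `m` be the largest index with `a m ≠ 0`, so that `k ≤ m`.
Every monomial `τ_j ⋯ τ_{n-1}` with `j ≤ m` is divisible by `τ_m ⋯ τ_{n-1}`, so this factor can be
removed from both the numerator and the denominator. What remains of the denominator has constant
term `a m ≠ 0`, hence is invertible near the origin.
-/

open Finset Metric

section ConsecutiveProducts

variable {n : ℕ}

/-- The monomial `τ_j ⋯ τ_{n-1}`, that is, `λ_j / λ_n` when `τ_i = λ_i / λ_{i+1}`. -/
def tailProd {M : Type*} [CommMonoid M] (τ : Fin n → M) (j : ℕ) : M :=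
  ∏ i ∈ univ.filter fun i : Fin n => j ≤ (i : ℕ), τ i

/-- The product `τ_j ⋯ τ_{m-1}` of consecutive coordinates: for `j ≤ m` it is the quotient of the
monomials `tailProd τ j` and `tailProd τ m`. The bounds are natural numbers, so that `m = n` is
allowed; indices beyond `n - 1` contribute nothing, and the product is `1` when `m ≤ j`. -/
def segmentProd {M : Type*} [CommMonoid M] (τ : Fin n → M) (j m : ℕ) : M :=
  ∏ i ∈ univ.filter fun i : Fin n => j ≤ (i : ℕ) ∧ (i : ℕ) < m, τ i

lemma segmentProd_mul_tailProd {M : Type*} [CommMonoid M] (τ : Fin n → M) {j m : ℕ}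
    (hjm : j ≤ m) : segmentProd τ j m * tailProd τ m = tailProd τ j := by
  have hdisj : Disjoint ({i | j ≤ (i : ℕ) ∧ (i : ℕ) < m} : Finset (Fin n))
      ({i | m ≤ (i : ℕ)} : Finset (Fin n)) :=
    disjoint_filter.2 fun _ _ hi => not_le.2 hi.2
  rw [segmentProd, tailProd, tailProd, ← prod_union hdisj, ← filter_or]
  congr! 2 with i
  omega

lemma segmentProd_self {M : Type*} [CommMonoid M] (τ : Fin n → M) (m : ℕ) :
    segmentProd τ m m = 1 :=
  prod_eq_one fun i hi => by
    have hi' := (mem_filter.1 hi).2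
    omega

lemma segmentProd_zero {M : Type*} [CommMonoidWithZero M] {j m : ℕ} (hjm : j < m) (hjn : j < n) :
    segmentProd (0 : Fin n → M) j m = 0 :=
  prod_eq_zero (i := ⟨j, hjn⟩) (by simpa using hjm) rfl

lemma analyticAt_segmentProd {𝕜 : Type*} [NontriviallyNormedField 𝕜] (j m : ℕ) (x : Fin n → 𝕜) :
    AnalyticAt 𝕜 (fun τ => segmentProd τ j m) x :=
  Finset.analyticAt_fun_prod _ fun i _ =>
    (ContinuousLinearMap.proj (R := 𝕜) (φ := fun _ : Fin n => 𝕜) i).analyticAt x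

lemma sum_mul_segmentProd_mul_tailProd {R : Type*} [CommSemiring R] (a : Fin (n + 1) → R)
    {m : Fin (n + 1)} (ha : ∀ j, m < j → a j = 0) (τ : Fin n → R) :
    (∑ j, a j * segmentProd τ j m) * tailProd τ m = ∑ j, a j * tailProd τ j := by
  rw [sum_mul]
  refine sum_congr rfl fun j _ => ?_
  rcases le_or_gt j m with hjm | hmj
  · rw [mul_assoc, segmentProd_mul_tailProd τ hjm]
  · simp only [ha j hmj, zero_mul]

lemma sum_mul_segmentProd_zero {R : Type*} [CommSemiring R] (a : Fin (n + 1) → R)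
    {m : Fin (n + 1)} (ha : ∀ j, m < j → a j = 0) :
    ∑ j, a j * segmentProd (0 : Fin n → R) j m = a m := by
  rw [Fintype.sum_eq_single m, segmentProd_self, mul_one]
  intro j hj
  rcases lt_or_gt_of_ne hj with hjm | hmj
  · rw [segmentProd_zero hjm (by omega), mul_zero]
  · rw [ha j hmj, zero_mul]

end ConsecutiveProducts

lemma exists_analyticOnNhd_ball_mul_mul_eq {𝕜 E : Type*} [NontriviallyNormedField 𝕜]
    [NormedAddCommGroup E] [NormedSpace 𝕜 E] {p u : E → 𝕜} {x : E}
    (hp : ∀ᶠ y in nhds x, AnalyticAt 𝕜 p y) (hu : ∀ᶠ y in nhds x, AnalyticAt 𝕜 u y)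
    (hux : u x ≠ 0) (f : E → 𝕜) :
    ∃ ε > (0 : ℝ), ∃ g : E → 𝕜, AnalyticOnNhd 𝕜 g (ball x ε) ∧
      ∀ y ∈ ball x ε, g y * (u y * f y) = p y * f y := by
  have hne : ∀ᶠ y in nhds x, u y ≠ 0 := hu.self_of_nhds.continuousAt.eventually_ne hux
  obtain ⟨ε, hε, hball⟩ := eventually_nhds_iff_ball.1 (hp.and (hu.and hne))
  refine ⟨ε, hε, p / u, fun y hy => ?_, fun y hy => ?_⟩ <;> obtain ⟨hpy, huy, huy₀⟩ := hball y hy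
  · exact hpy.div huy huy₀
  · rw [← mul_assoc, Pi.div_apply, div_mul_cancel₀ _ huy₀]

theorem stmt2_general {𝕜 : Type*} [NontriviallyNormedField 𝕜] {n : ℕ} (k : Fin (n + 1))
    (a : Fin (n + 1) → 𝕜) (hak : a k ≠ 0) :
    ∃ ε > (0 : ℝ), ∃ g : (Fin n → 𝕜) → 𝕜, AnalyticOnNhd 𝕜 g (ball 0 ε) ∧
      ∀ τ ∈ ball (0 : Fin n → 𝕜) ε, g τ * ∑ j, a j * tailProd τ j = tailProd τ k := by
  obtain ⟨m, hkm, hm⟩ := (Set.toFinite {j | a j ≠ 0}).exists_le_maximal hak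
  have hvanish : ∀ j, m < j → a j = 0 := fun j hmj => by_contra fun hj => hm.not_gt hj hmj
  have hanalytic (x : Fin n → 𝕜) : AnalyticAt 𝕜 (fun τ => ∑ j, a j * segmentProd τ j m) x :=
    Finset.analyticAt_fun_sum _ fun j _ => analyticAt_const.mul (analyticAt_segmentProd j m x)
  have hne : ∑ j, a j * segmentProd (0 : Fin n → 𝕜) j m ≠ 0 :=
    (sum_mul_segmentProd_zero a hvanish).trans_ne hm.prop
  simpa only [sum_mul_segmentProd_mul_tailProd a hvanish, segmentProd_mul_tailProd _ hkm] using
    exists_analyticOnNhd_ball_mul_mul_eq (.of_forall (analyticAt_segmentProd k m))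
      (.of_forall hanalytic) hne fun τ => tailProd τ m

open Finset in
/-- the quotient `(τ_k⋯τ_{r-1}) / (∑_j a_j τ_j⋯τ_{r-1})`
(1-indexed; here `k` and the coefficient index are 0-indexed via `Fin r`)
extends to a function analytic near the origin of `ℂ^{r-1}`. -/
theorem stmt2 (r : ℕ) (hr : 1 ≤ r) (k : Fin r)
    (a : Fin r → ℝ) (ha : ∀ j, 0 ≤ a j) (hak : a k = 1)
    (N D : (Fin (r - 1) → ℂ) → ℂ)
    (hN : ∀ τ, N τ = ∏ i ∈ univ.filter fun i : Fin (r - 1) => (k : ℕ) ≤ (i : ℕ), τ i)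
    (hD : ∀ τ, D τ = ∑ j : Fin r, (a j : ℂ) *
        ∏ i ∈ univ.filter fun i : Fin (r - 1) => (j : ℕ) ≤ (i : ℕ), τ i) :
    ∃ ε > (0 : ℝ), ∃ g : (Fin (r - 1) → ℂ) → ℂ,
      AnalyticOnNhd ℂ g (Metric.ball 0 ε) ∧
      ∀ τ ∈ Metric.ball (0 : Fin (r - 1) → ℂ) ε, g τ * D τ = N τ := by
  obtain ⟨n, rfl⟩ := Nat.exists_eq_add_of_le' hr
  simp only [hN, hD]
  exact stmt2_general k (fun j => (a j : ℂ)) (by simp [hak])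
end

section
/- Let r ≥ 1 and 0 ≤ p ≤ r, let A be a p×r matrix of real numbers with A(k,ℓ) ≥ 0 for all k,ℓ and A(k,k) = 1 for all 1 ≤ k ≤ p, and let μ_1 > μ_2 > ⋯ > μ_r be positive integers. Set δ_k = 1 if A(k,ℓ) = 0 for all ℓ > k and δ_k = 0 otherwise. Then there exist an open set U ⊆ ℂ containing the half-axis [0,∞) and a function h : ℂ → ℂ holomorphic on U such that for every real κ > 0, h(κ) = Π_{k=1}^p ( κ^{μ_k} / Σ_{ℓ=1}^r A(k,ℓ)·κ^{μ_ℓ} ), and moreover h(0) = Π_{k=1}^p δ_k. -/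
/-!
A nonzero polynomial `q` with nonnegative coefficients has no zeros on `(0, ∞)`, so the only
obstruction to extending `κ ^ n / q κ` holomorphically across `[0, ∞)` is the zero of `q` at the
origin. If the order `m` of that zero is at most `n`, then `κ ^ m` cancels. The reduced fraction
vanishes at the origin when `m < n`, and equals the inverse of the lowest coefficient of `q` when
`m = n`.
-/

/-- `f`, given on `(0, ∞)`, extends holomorphically to an open neighbourhood of `[0, ∞)` in `ℂ`,
with value `c` at the origin. The values of `f` outside `(0, ∞)` are ignored. -/
def HasHolomorphicExtension (f : ℝ → ℂ) (c : ℂ) : Prop :=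
  ∃ U : Set ℂ, IsOpen U ∧ (∀ x : ℝ, 0 ≤ x → (x : ℂ) ∈ U) ∧
    ∃ h : ℂ → ℂ, DifferentiableOn ℂ h U ∧ (∀ κ : ℝ, 0 < κ → h κ = f κ) ∧ h 0 = c

namespace HasHolomorphicExtension

theorem congr {f g : ℝ → ℂ} {c : ℂ} (hf : HasHolomorphicExtension f c)
    (hfg : ∀ κ : ℝ, 0 < κ → f κ = g κ) : HasHolomorphicExtension g c := by
  obtain ⟨U, hU, hmem, h, hdiff, heq, hzero⟩ := hf
  exact ⟨U, hU, hmem, h, hdiff, fun κ hκ => (heq κ hκ).trans (hfg κ hκ), hzero⟩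

theorem prod {K : Type*} [Fintype K] {f : K → ℝ → ℂ} {c : K → ℂ}
    (hf : ∀ k, HasHolomorphicExtension (f k) (c k)) :
    HasHolomorphicExtension (fun κ => ∏ k, f k κ) (∏ k, c k) := by
  choose U hU hmem h hdiff heq hzero using hf
  refine ⟨⋂ k, U k, isOpen_iInter_of_finite hU, fun x hx => Set.mem_iInter.2 fun k => hmem k x hx,
    fun z => ∏ k, h k z, ?_, ?_, ?_⟩
  · exact DifferentiableOn.fun_finsetProd fun k _ => (hdiff k).mono (Set.iInter_subset U k)
  · exact fun κ hκ => Finset.prod_congr rfl fun k _ => heq k κ hκ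
  · exact Finset.prod_congr rfl fun k _ => hzero k

end HasHolomorphicExtension

section Polynomial

open Polynomial

theorem hasHolomorphicExtension_eval_div_eval (p : ℂ[X]) {q : ℂ[X]}
    (hq : ∀ x : ℝ, 0 ≤ x → q.eval (x : ℂ) ≠ 0) :
    HasHolomorphicExtension (fun κ => p.eval (κ : ℂ) / q.eval (κ : ℂ)) (p.eval 0 / q.eval 0) :=
  ⟨{z | q.eval z ≠ 0}, isOpen_ne_fun q.continuous continuous_const, hq,
    fun z => p.eval z / q.eval z,
    p.differentiable.differentiableOn.div q.differentiable.differentiableOn fun _ hz => hz,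
    fun _ _ => rfl, rfl⟩

theorem exists_eq_X_pow_natTrailingDegree_mul {R : Type*} [Semiring R] (q : R[X]) :
    ∃ r : R[X], q = X ^ q.natTrailingDegree * r ∧ r.eval 0 = q.trailingCoeff := by
  obtain ⟨r, hr⟩ : X ^ q.natTrailingDegree ∣ q :=
    X_pow_dvd_iff.2 fun _ hd => coeff_eq_zero_of_lt_natTrailingDegree hd
  refine ⟨r, hr, ?_⟩
  calc r.eval 0 = (X ^ q.natTrailingDegree * r).coeff q.natTrailingDegree := by
        rw [coeff_X_pow_mul', if_pos le_rfl, Nat.sub_self, coeff_zero_eq_eval_zero]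
    _ = q.trailingCoeff := by rw [← hr, trailingCoeff]

theorem X_pow_dvd_iff_le_natTrailingDegree {R : Type*} [Semiring R] {q : R[X]} (hq : q ≠ 0)
    {n : ℕ} : X ^ n ∣ q ↔ n ≤ q.natTrailingDegree :=
  X_pow_dvd_iff.trans ⟨le_natTrailingDegree hq, fun hn _ hd =>
    coeff_eq_zero_of_lt_natTrailingDegree (hd.trans_le hn)⟩

theorem hasHolomorphicExtension_pow_div_eval {q : ℂ[X]} {n : ℕ} (hn : q.natTrailingDegree ≤ n)
    (hq : ∀ κ : ℝ, 0 < κ → q.eval (κ : ℂ) ≠ 0) [Decidable (X ^ n ∣ q)] :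
    HasHolomorphicExtension (fun κ => (κ : ℂ) ^ n / q.eval (κ : ℂ))
      (if X ^ n ∣ q then (q.coeff n)⁻¹ else 0) := by
  have hq0 : q ≠ 0 := by
    rintro rfl
    exact hq 1 one_pos eval_zero
  obtain ⟨r, hqr, hr_zero⟩ := exists_eq_X_pow_natTrailingDegree_mul q
  have hq_eval (z : ℂ) : q.eval z = z ^ q.natTrailingDegree * r.eval z := by
    conv_lhs => rw [hqr, eval_mul, eval_pow, eval_X]
  have hr_ne (x : ℝ) (hx : 0 ≤ x) : r.eval (x : ℂ) ≠ 0 := by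
    rcases hx.eq_or_lt with rfl | hx
    · rwa [Complex.ofReal_zero, hr_zero, Ne, trailingCoeff_eq_zero]
    · exact right_ne_zero_of_mul (hq_eval x ▸ hq x hx)
  have hvalue : (X ^ (n - q.natTrailingDegree) : ℂ[X]).eval 0 / r.eval 0 =
      if X ^ n ∣ q then (q.coeff n)⁻¹ else 0 := by
    rw [hr_zero, eval_pow, eval_X]
    rcases hn.eq_or_lt with rfl | hlt
    · rw [if_pos ((X_pow_dvd_iff_le_natTrailingDegree hq0).2 le_rfl), Nat.sub_self, pow_zero,
        one_div, trailingCoeff]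
    · rw [if_neg (mt (X_pow_dvd_iff_le_natTrailingDegree hq0).1 hlt.not_ge),
        zero_pow (Nat.sub_ne_zero_of_lt hlt), zero_div]
  rw [← hvalue]
  refine (hasHolomorphicExtension_eval_div_eval _ hr_ne).congr fun κ hκ => ?_
  have hκm : (κ : ℂ) ^ q.natTrailingDegree ≠ 0 := pow_ne_zero _ (Complex.ofReal_ne_zero.2 hκ.ne')
  rw [hq_eval, ← pow_mul_pow_sub _ hn, mul_div_mul_left _ _ hκm, eval_pow, eval_X]

section Fewnomial

variable {ι R : Type*} [Fintype ι] [Semiring R]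

/-- The polynomial `∑ l, a l * X ^ μ l` with prescribed coefficients and exponents. The exponents
may repeat, in which case the corresponding coefficients add up. -/
noncomputable def fewnomial (a : ι → R) (μ : ι → ℕ) : R[X] :=
  ∑ l, C (a l) * X ^ μ l

theorem eval_fewnomial (a : ι → R) (μ : ι → ℕ) (x : R) :
    (fewnomial a μ).eval x = ∑ l, a l * x ^ μ l := by
  simp only [fewnomial, eval_finsetSum, eval_C_mul, eval_X_pow]

theorem coeff_fewnomial (a : ι → R) (μ : ι → ℕ) (n : ℕ) :
    (fewnomial a μ).coeff n = ∑ l with μ l = n, a l := by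
  simp only [fewnomial, finsetSum_coeff, coeff_C_mul_X_pow, Finset.sum_filter, eq_comm]

variable [PartialOrder R] {a : ι → R}

theorem coeff_fewnomial_eq_zero_iff [IsOrderedAddMonoid R] (ha : ∀ l, 0 ≤ a l) (μ : ι → ℕ) (n : ℕ) :
    (fewnomial a μ).coeff n = 0 ↔ ∀ l, μ l = n → a l = 0 := by
  rw [coeff_fewnomial, Finset.sum_eq_zero_iff_of_nonneg fun l _ => ha l]
  simp only [Finset.mem_filter, Finset.mem_univ, true_and]

theorem X_pow_dvd_fewnomial_iff [IsOrderedAddMonoid R] (ha : ∀ l, 0 ≤ a l) (μ : ι → ℕ) (n : ℕ) :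
    X ^ n ∣ fewnomial a μ ↔ ∀ l, μ l < n → a l = 0 := by
  simp only [X_pow_dvd_iff, coeff_fewnomial_eq_zero_iff ha]
  exact ⟨fun h l hl => h (μ l) hl l rfl, fun h _ hd l hl => h l (hl ▸ hd)⟩

theorem eval_fewnomial_pos [IsStrictOrderedRing R] (ha : ∀ l, 0 ≤ a l) (μ : ι → ℕ) {i : ι}
    (hi : 0 < a i) {x : R} (hx : 0 < x) : 0 < (fewnomial a μ).eval x := by
  rw [eval_fewnomial]
  exact Finset.sum_pos' (fun l _ => mul_nonneg (ha l) (pow_nonneg hx.le _))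
    ⟨i, Finset.mem_univ i, mul_pos hi (pow_pos hx _)⟩

end Fewnomial

open scoped ComplexOrder in
theorem hasHolomorphicExtension_pow_div_sum {ι : Type*} [Fintype ι] {a : ι → ℝ}
    (ha : ∀ l, 0 ≤ a l) (μ : ι → ℕ) {i : ι} (hi : 0 < a i) :
    HasHolomorphicExtension (fun κ => (κ : ℂ) ^ μ i / ∑ l, (a l : ℂ) * (κ : ℂ) ^ μ l)
      (if ∀ l, μ l < μ i → a l = 0 then (∑ l with μ l = μ i, (a l : ℂ))⁻¹ else 0) := by
  classical
  have ha' (l : ι) : (0 : ℂ) ≤ a l := Complex.zero_le_real.2 (ha l)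
  have hi' : (0 : ℂ) < a i := Complex.zero_lt_real.2 hi
  have hcoeff : (fewnomial (fun l => (a l : ℂ)) μ).coeff (μ i) ≠ 0 := fun h =>
    hi'.ne' ((coeff_fewnomial_eq_zero_iff ha' μ (μ i)).1 h i rfl)
  simpa only [eval_fewnomial, coeff_fewnomial, X_pow_dvd_fewnomial_iff ha', Complex.ofReal_eq_zero]
    using hasHolomorphicExtension_pow_div_eval (natTrailingDegree_le_of_ne_zero hcoeff)
      fun κ hκ => (eval_fewnomial_pos ha' μ hi' (Complex.zero_lt_real.2 hκ)).ne'

end Polynomial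

theorem stmt4_general {K ι : Type*} [Fintype K] [Fintype ι] (A : K → ι → ℝ)
    (hA : ∀ k l, 0 ≤ A k l) (d : K → ι) (hd : ∀ k, 0 < A k (d k)) (μ : ι → ℕ) :
    HasHolomorphicExtension
      (fun κ => ∏ k, (κ : ℂ) ^ μ (d k) / ∑ l, (A k l : ℂ) * (κ : ℂ) ^ μ l)
      (∏ k, if ∀ l, μ l < μ (d k) → A k l = 0 then
        (∑ l with μ l = μ (d k), (A k l : ℂ))⁻¹ else 0) :=
  .prod fun k => hasHolomorphicExtension_pow_div_sum (hA k) μ (hd k)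

open Finset in
/-- the function `κ ↦ ∏_k κ^{μ_k} / ∑_ℓ A(k,ℓ)κ^{μ_ℓ}` extends
holomorphically to a neighborhood of `[0,∞) ⊂ ℂ`, with value `∏_k δ_k` at `0`. -/
theorem stmt4 (r p : ℕ) (hr : 1 ≤ r) (hpr : p ≤ r)
    (A : Fin p → Fin r → ℝ)
    (hA : ∀ k l, 0 ≤ A k l)
    (hdiag : ∀ k : Fin p, A k (Fin.castLE hpr k) = 1)
    (μ : Fin r → ℕ) (hμpos : ∀ l, 0 < μ l) (hμ : StrictAnti μ) :
    ∃ U : Set ℂ, IsOpen U ∧ (∀ x : ℝ, 0 ≤ x → (x : ℂ) ∈ U) ∧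
      ∃ h : ℂ → ℂ, DifferentiableOn ℂ h U ∧
        (∀ κ : ℝ, 0 < κ →
          h κ = ∏ k : Fin p,
            (κ : ℂ) ^ μ (Fin.castLE hpr k) / ∑ l, (A k l : ℂ) * (κ : ℂ) ^ μ l) ∧
        h 0 = ∏ k : Fin p,
          if ∀ l : Fin r, (k : ℕ) < (l : ℕ) → A k l = 0 then (1 : ℂ) else 0 := by
  simpa [HasHolomorphicExtension, hμ.lt_iff_gt, hμ.injective.eq_iff, Fin.lt_def, hdiag,
    Finset.filter_eq'] using stmt4_general A hA (Fin.castLE hpr) (by simp [hdiag]) μ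
end

section
/- Let φ : ℂ → ℂ be a smooth (C^∞) function with compact support. Then, as λ → 0 through positive real values, λ · ∫_ℂ ‖z‖^{2λ−2} · φ(z) dA(z) → π · φ(0); in particular, for each real λ > 0 the function z ↦ ‖z‖^{2λ−2}·φ(z) is integrable on ℂ. -/
/-!
On a space of dimension `d`, integration in polar coordinates gives `l * ‖x‖ ^ (d * l - d)` mass
`μ (ball 0 1)` on the unit ball, for every `l > 0`. Away from the origin this function tends to `0`
uniformly as `l → 0⁺`, because of the factor `l`. So, divided by `μ (ball 0 1)`, it is an
approximation of the identity. On `ℂ`, where `d = 2` and the unit disc has area `π`, it is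
`l * ‖z‖ ^ (2 * l - 2) / π`.
-/

section RieszPeak

open Filter MeasureTheory Metric Module Set
open scoped Topology

lemma measureReal_ball_pos {X : Type*} [PseudoMetricSpace X] [ProperSpace X] [MeasurableSpace X]
    (μ : Measure X) [μ.IsOpenPosMeasure] [IsFiniteMeasureOnCompacts μ] (x : X) {r : ℝ}
    (hr : 0 < r) : 0 < μ.real (ball x r) :=
  ENNReal.toReal_pos (measure_ball_pos μ x hr).ne' measure_ball_lt_top.ne

variable {E F : Type*} [NormedAddCommGroup E] [NormedSpace ℝ E]
  [NormedAddCommGroup F] [NormedSpace ℝ F]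

lemma neg_finrank_lt_finrank_mul_sub_finrank [Nontrivial E] [FiniteDimensional ℝ E] {l : ℝ}
    (hl : 0 < l) : -finrank ℝ E < finrank ℝ E * l - finrank ℝ E := by
  have hd : 0 < (finrank ℝ E : ℝ) := Nat.cast_pos.2 finrank_pos
  linarith [mul_pos hd hl]

variable [MeasurableSpace E]

/-- The Riesz kernel of order `d * l` on a space of dimension `d`, normalized to have integral one
on the unit ball when `μ` is a Haar measure; it is used as an approximation of the identity as
`l → 0⁺`. Measuring the order in multiples of the dimension makes the normalizing factor
proportional to `l`. -/
noncomputable def rieszPeak (μ : Measure E) (l : ℝ) (x : E) : ℝ :=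
  l / μ.real (ball 0 1) * ‖x‖ ^ (finrank ℝ E * l - finrank ℝ E)

lemma rieszPeak_nonneg (μ : Measure E) {l : ℝ} (hl : 0 ≤ l) (x : E) : 0 ≤ rieszPeak μ l x := by
  unfold rieszPeak
  positivity

lemma measurable_rieszPeak [OpensMeasurableSpace E] (μ : Measure E) (l : ℝ) :
    Measurable (rieszPeak μ l) := by
  unfold rieszPeak
  fun_prop

lemma rieszPeak_le_of_le_norm (μ : Measure E) {l δ : ℝ} (hl : l ∈ Icc 0 1) (hδ : 0 < δ) {x : E}
    (hx : δ ≤ ‖x‖) :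
    rieszPeak μ l x ≤ l / μ.real (ball 0 1) * δ ^ (finrank ℝ E * l - finrank ℝ E) := by
  have hexp : finrank ℝ E * l - finrank ℝ E ≤ 0 :=
    sub_nonpos.2 (mul_le_of_le_one_right (Nat.cast_nonneg _) hl.2)
  exact mul_le_mul_of_nonneg_left (Real.rpow_le_rpow_of_nonpos hδ hx hexp)
    (div_nonneg hl.1 measureReal_nonneg)

lemma tendstoUniformlyOn_rieszPeak_compl (μ : Measure E) {u : Set E} (hu : u ∈ 𝓝 0) :
    TendstoUniformlyOn (rieszPeak μ) 0 (𝓝[>] 0) uᶜ := by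
  obtain ⟨δ, hδ, hball⟩ := Metric.mem_nhds_iff.1 hu
  let bound (l : ℝ) : ℝ := l / μ.real (ball 0 1) * δ ^ (finrank ℝ E * l - finrank ℝ E)
  have hbound : Tendsto bound (𝓝[>] 0) (𝓝 0) := by
    have hcont : Continuous bound := by fun_prop (disch := simp [hδ.ne'])
    simpa [bound] using (hcont.tendsto 0).mono_left nhdsWithin_le_nhds
  refine Metric.tendstoUniformlyOn_iff.2 fun ε hε ↦ ?_
  filter_upwards [Ioo_mem_nhdsGT one_pos, hbound.eventually_lt_const hε] with l hl hlε x hx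
  have hδx : δ ≤ ‖x‖ := le_of_not_gt fun h ↦ hx (hball (mem_ball_zero_iff.2 h))
  rw [Pi.zero_apply, dist_zero_left, Real.norm_of_nonneg (rieszPeak_nonneg μ hl.1.le x)]
  exact (rieszPeak_le_of_le_norm μ (Ioo_subset_Icc_self hl) hδ hδx).trans_lt hlε

variable [Nontrivial E] [FiniteDimensional ℝ E] [BorelSpace E] (μ : Measure E)
  [μ.IsAddHaarMeasure]

lemma locallyIntegrable_norm_rpow {s : ℝ} (hs : -finrank ℝ E < s) :
    LocallyIntegrable (fun x : E ↦ ‖x‖ ^ s) μ := by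
  refine locallyIntegrable_of_norm_le_rpow (C := 1) (α := -s) finrank_pos (by linarith)
    (.of_forall fun x ↦ ?_) (measurable_norm.pow_const s).aestronglyMeasurable
  rw [neg_neg, one_mul, Real.norm_of_nonneg (by positivity)]

lemma setIntegral_ball_fun_norm_addHaar (f : ℝ → F) (r : ℝ) :
    ∫ x in ball 0 r, f ‖x‖ ∂μ =
      finrank ℝ E • μ.real (ball 0 1) • ∫ t in Ioo 0 r, t ^ (finrank ℝ E - 1) • f t := by
  have hindicator : (ball (0 : E) r).indicator (fun x ↦ f ‖x‖) =
      fun x ↦ (Iio r).indicator f ‖x‖ := by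
    ext x
    simp [indicator]
  rw [← integral_indicator measurableSet_ball, hindicator, integral_fun_norm_addHaar]
  simp only [← indicator_smul_apply (Iio r) (fun t : ℝ ↦ t ^ (finrank ℝ E - 1)) f]
  rw [setIntegral_indicator measurableSet_Iio, Ioi_inter_Iio]

lemma setIntegral_ball_norm_rpow {r s : ℝ} (hr : 0 ≤ r) (hs : -finrank ℝ E < s) :
    ∫ x in ball 0 r, ‖x‖ ^ s ∂μ =
      finrank ℝ E * μ.real (ball 0 1) * (r ^ (s + finrank ℝ E) / (s + finrank ℝ E)) := by
  have hradial : ∫ t in Ioo 0 r, t ^ (finrank ℝ E - 1) • t ^ s =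
      r ^ (s + finrank ℝ E) / (s + finrank ℝ E) :=
    calc ∫ t in Ioo 0 r, t ^ (finrank ℝ E - 1) • t ^ s
      _ = ∫ t in Ioo 0 r, t ^ (s + finrank ℝ E - 1) := by
        refine setIntegral_congr_fun measurableSet_Ioo fun t ht ↦ ?_
        rw [smul_eq_mul, ← Real.rpow_natCast, ← Real.rpow_add ht.1,
          Nat.cast_pred finrank_pos]
        ring_nf
      _ = ∫ t in 0..r, t ^ (s + finrank ℝ E - 1) := by
        rw [intervalIntegral.integral_of_le hr, integral_Ioc_eq_integral_Ioo]
      _ = r ^ (s + finrank ℝ E) / (s + finrank ℝ E) := by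
        rw [integral_rpow (.inl (by linarith)), sub_add_cancel,
          Real.zero_rpow (by linarith), sub_zero]
  rw [setIntegral_ball_fun_norm_addHaar μ (· ^ s), hradial, nsmul_eq_mul, smul_eq_mul, mul_assoc]

lemma setIntegral_ball_rieszPeak {l : ℝ} (hl : 0 < l) :
    ∫ x in ball 0 1, rieszPeak μ l x ∂μ = 1 := by
  have hd : (finrank ℝ E : ℝ) ≠ 0 := Nat.cast_ne_zero.2 finrank_pos.ne'
  have hμ := (measureReal_ball_pos μ (0 : E) one_pos).ne'
  simp only [rieszPeak]
  rw [integral_const_mul, setIntegral_ball_norm_rpow μ zero_le_one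
    (neg_finrank_lt_finrank_mul_sub_finrank hl), sub_add_cancel, Real.one_rpow]
  field_simp

variable [CompleteSpace F] {f : E → F}

lemma tendsto_integral_rieszPeak_smul {a : F} (hf : Integrable f μ) (ha : Tendsto f (𝓝 0) (𝓝 a)) :
    Tendsto (fun l ↦ ∫ x, rieszPeak μ l x • f x ∂μ) (𝓝[>] 0) (𝓝 a) := by
  refine tendsto_integral_peak_smul_of_integrable_of_tendsto measurableSet_ball
    (ball_mem_nhds 0 one_pos) measure_ball_lt_top.ne ?_ ?_ ?_ ?_ hf ha
  · filter_upwards [self_mem_nhdsWithin] with l hl using rieszPeak_nonneg μ (le_of_lt hl)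
  · exact fun u hu h0 ↦ tendstoUniformlyOn_rieszPeak_compl μ (hu.mem_nhds h0)
  · refine tendsto_const_nhds.congr' ?_
    filter_upwards [self_mem_nhdsWithin] with l hl using (setIntegral_ball_rieszPeak μ hl).symm
  · exact .of_forall fun l ↦ (measurable_rieszPeak μ l).aestronglyMeasurable

lemma tendsto_smul_integral_norm_rpow_smul {a : F} (hf : Integrable f μ)
    (ha : Tendsto f (𝓝 0) (𝓝 a)) :
    Tendsto (fun l : ℝ ↦ l • ∫ x, ‖x‖ ^ (finrank ℝ E * l - finrank ℝ E) • f x ∂μ) (𝓝[>] 0)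
      (𝓝 (μ.real (ball (0 : E) 1) • a)) := by
  have hμ := (measureReal_ball_pos μ (0 : E) one_pos).ne'
  refine ((tendsto_integral_rieszPeak_smul μ hf ha).const_smul (μ.real (ball (0 : E) 1))).congr
    fun l ↦ ?_
  simp only [rieszPeak, mul_smul]
  rw [integral_smul, smul_smul, mul_div_cancel₀ _ hμ]

theorem stmt6_general (hf : Continuous f) (hsupp : HasCompactSupport f) :
    (∀ l : ℝ, 0 < l → Integrable (fun x ↦ ‖x‖ ^ (finrank ℝ E * l - finrank ℝ E) • f x) μ) ∧
    Tendsto (fun l : ℝ ↦ l • ∫ x, ‖x‖ ^ (finrank ℝ E * l - finrank ℝ E) • f x ∂μ) (𝓝[>] 0)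
      (𝓝 (μ.real (ball (0 : E) 1) • f 0)) := by
  constructor
  · intro l hl
    have hloc := locallyIntegrable_norm_rpow μ (neg_finrank_lt_finrank_mul_sub_finrank (E := E) hl)
    exact hloc.integrable_smul_right_of_hasCompactSupport hf hsupp
  · exact tendsto_smul_integral_norm_rpow_smul μ (hf.integrable_of_hasCompactSupport hsupp)
      (hf.tendsto 0)

end RieszPeak

open Filter MeasureTheory in
/-- `λ ∫_ℂ |z|^{2λ-2} φ(z) dA(z) → π φ(0)` as `λ → 0⁺`,
with integrability for each `λ > 0`. -/
theorem stmt6 (φ : ℂ → ℂ) (hφ : ContDiff ℝ (⊤ : ℕ∞) φ) (hsupp : HasCompactSupport φ) :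
    (∀ l : ℝ, 0 < l →
      Integrable (fun z : ℂ => (‖z‖ ^ (2 * l - 2) : ℝ) • φ z)) ∧
    Tendsto
      (fun l : ℝ => (l : ℂ) * ∫ z : ℂ, (‖z‖ ^ (2 * l - 2) : ℝ) • φ z)
      (nhdsWithin 0 (Set.Ioi 0))
      (nhds ((Real.pi : ℂ) * φ 0)) := by
  simpa [Measure.real] using stmt6_general volume hφ.continuous hsupp
end

section
/- Let φ : ℂ → ℂ be a smooth (C^∞) function with compact support and let k be a natural number. Then there exist δ > 0 and a function g : ℂ → ℂ holomorphic on the half-plane {λ ∈ ℂ : Re λ > −δ} such that for every λ ∈ ℂ with Re λ > k/2, the function z ↦ ‖z‖^{2λ} · z^{−k} · φ(z) is integrable on ℂ and g(λ) = ∫_ℂ ‖z‖^{2λ} · z^{−k} · φ(z) dA(z). -/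
/-!
In polar coordinates `|z|^{2λ} z^{-k}` is `r^{2λ-k} e^{-ikθ}`, so the integral is the Mellin
transform at `2λ - k + 2` of the `k`-th angular Fourier coefficient `r ↦ ∫ e^{-ikθ} φ(r e^{iθ}) dθ`.
The radial derivative of the `m`-th coefficient of `φ` is the sum of the `(m-1)`-st coefficient of
`∂φ` and the `(m+1)`-st of `∂̄φ`, and a coefficient of nonzero index vanishes at `r = 0`. Induction
then gives `O(r^|k|)` at the origin, so the Mellin transform is holomorphic for
`Re (2λ - k + 2) > -|k|`, which for `k ≥ 0` is the half-plane `Re λ > -1`.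
-/

open Asymptotics Complex Filter MeasureTheory Set Topology
open scoped ComplexConjugate Real

section Calculus

variable {𝕜 E : Type*} [RCLike 𝕜] [NormedAddCommGroup E] [NormedSpace 𝕜 E]

theorem isBigO_sub_pow_succ_of_hasDerivAt {f f' : 𝕜 → E} {x₀ : 𝕜} {n : ℕ}
    (hf : ∀ᶠ x in 𝓝 x₀, HasDerivAt f (f' x) x) (hf' : f' =O[𝓝 x₀] fun x ↦ (x - x₀) ^ n) :
    (fun x ↦ f x - f x₀) =O[𝓝 x₀] fun x ↦ (x - x₀) ^ (n + 1) := by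
  obtain ⟨C, hC, hbound⟩ := hf'.exists_nonneg
  obtain ⟨ε, hε, hball⟩ := Metric.eventually_nhds_iff_ball.1 (hf.and hbound.bound)
  refine .of_bound C ?_
  filter_upwards [Metric.ball_mem_nhds x₀ hε] with x hx
  have hsub : Metric.closedBall x₀ ‖x - x₀‖ ⊆ Metric.ball x₀ ε :=
    Metric.closedBall_subset_ball (mem_ball_iff_norm.1 hx)
  have hderiv : ∀ y ∈ Metric.closedBall x₀ ‖x - x₀‖, ‖f' y‖ ≤ C * ‖x - x₀‖ ^ n := fun y hy ↦
    calc ‖f' y‖ ≤ C * ‖(y - x₀) ^ n‖ := (hball y (hsub hy)).2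
      _ = C * ‖y - x₀‖ ^ n := by rw [norm_pow]
      _ ≤ C * ‖x - x₀‖ ^ n := by gcongr; exact mem_closedBall_iff_norm.1 hy
  calc ‖f x - f x₀‖ ≤ C * ‖x - x₀‖ ^ n * ‖x - x₀‖ :=
        Convex.norm_image_sub_le_of_norm_hasDerivWithin_le
          (fun y hy ↦ (hball y (hsub hy)).1.hasDerivWithinAt) hderiv (convex_closedBall x₀ _)
          (Metric.mem_closedBall_self (norm_nonneg _)) (mem_closedBall_iff_norm.2 le_rfl)
    _ = C * ‖(x - x₀) ^ (n + 1)‖ := by rw [norm_pow, pow_succ, mul_assoc]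

theorem hasDerivAt_intervalIntegral_of_continuous [NormedSpace ℝ E] {F F' : 𝕜 → ℝ → E}
    (hF : ∀ x, Continuous (F x)) (hF' : Continuous F'.uncurry)
    (hderiv : ∀ x t, HasDerivAt (F · t) (F' x t) x) (a b : ℝ) (x : 𝕜) :
    HasDerivAt (fun y ↦ ∫ t in a..b, F y t) (∫ t in a..b, F' x t) x := by
  obtain ⟨C, hC⟩ := ((isCompact_closedBall x 1).prod isCompact_uIcc).exists_bound_of_continuousOn
    (hF'.continuousOn (s := Metric.closedBall x 1 ×ˢ uIcc a b))
  refine (intervalIntegral.hasDerivAt_integral_of_dominated_loc_of_deriv_le (bound := fun _ ↦ C)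
    (Metric.closedBall_mem_nhds x one_pos) (.of_forall fun y ↦ (hF y).aestronglyMeasurable)
    ((hF x).intervalIntegrable a b) (hF'.uncurry_left x).aestronglyMeasurable ?_
    intervalIntegrable_const (.of_forall fun t _ y _ ↦ hderiv y t)).2
  exact .of_forall fun t ht y hy ↦ hC (y, t) ⟨hy, uIoc_subset_uIcc ht⟩

end Calculus

section PolarCoordinates

variable {E : Type*} [NormedAddCommGroup E] [NormedSpace ℝ E]

theorem polarCoord_symm_eq_circleMap (r θ : ℝ) :
    Complex.polarCoord.symm (r, θ) = circleMap 0 r θ := by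
  simp [circleMap_zero, exp_mul_I]

theorem integrableOn_smul_comp_polarCoord_symm {f : ℂ → E} (hf : Integrable f) :
    IntegrableOn (fun p : ℝ × ℝ ↦ p.1 • f (Complex.polarCoord.symm p)) polarCoord.target := by
  have hf' : Integrable (fun p ↦ f (measurableEquivRealProd.symm p)) :=
    volume_preserving_equiv_real_prod.symm.integrable_comp_emb
      measurableEquivRealProd.symm.measurableEmbedding |>.2 hf
  have h := (integrableOn_image_iff_integrableOn_abs_det_fderiv_smul volume
    polarCoord.open_target.measurableSet
    (fun p _ ↦ (hasFDerivAt_polarCoord_symm p).hasFDerivWithinAt) polarCoord.symm.injOn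
    (fun p ↦ f (measurableEquivRealProd.symm p))).1 hf'.integrableOn
  refine h.congr_fun (fun p hp ↦ ?_) polarCoord.open_target.measurableSet
  simp only [det_fderivPolarCoordSymm, abs_of_pos (mem_Ioi.1 hp.1),
    measurableEquivRealProd_symm_polarCoord_symm_apply]

theorem integral_eq_integral_Ioi_smul_integral_circleMap {f : ℂ → E} (hf : Integrable f) :
    ∫ z, f z = ∫ r in Ioi (0 : ℝ), r • ∫ θ in -π..π, f (circleMap 0 r θ) := by
  have hf' := integrableOn_smul_comp_polarCoord_symm hf
  rw [polarCoord_target, Measure.volume_eq_prod] at hf'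
  rw [← Complex.integral_comp_polarCoord_symm, polarCoord_target, Measure.volume_eq_prod,
    setIntegral_prod _ hf']
  simp only [polarCoord_symm_eq_circleMap, integral_smul, ← integral_Ioc_eq_integral_Ioo,
    ← intervalIntegral.integral_of_le (neg_le_self Real.pi_pos.le)]

end PolarCoordinates

variable {E : Type*} [NormedAddCommGroup E] [NormedSpace ℂ E]

section Wirtinger

/-- The Wirtinger derivative `∂f = (∂f/∂x - i ∂f/∂y) / 2` of a real-differentiable function on
`ℂ`. -/
noncomputable def wirtingerDeriv (f : ℂ → E) (z : ℂ) : E :=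
  (2⁻¹ : ℂ) • (fderiv ℝ f z 1 - I • fderiv ℝ f z I)

/-- The conjugate Wirtinger derivative `∂̄f = (∂f/∂x + i ∂f/∂y) / 2` of a real-differentiable
function on `ℂ`. -/
noncomputable def wirtingerDerivBar (f : ℂ → E) (z : ℂ) : E :=
  (2⁻¹ : ℂ) • (fderiv ℝ f z 1 + I • fderiv ℝ f z I)

theorem contDiff_wirtingerDeriv {n : WithTop ℕ∞} {f : ℂ → E} (hf : ContDiff ℝ (n + 1) f) :
    ContDiff ℝ n (wirtingerDeriv f) := by
  have := hf.fderiv_right le_rfl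
  unfold wirtingerDeriv
  fun_prop

theorem contDiff_wirtingerDerivBar {n : WithTop ℕ∞} {f : ℂ → E} (hf : ContDiff ℝ (n + 1) f) :
    ContDiff ℝ n (wirtingerDerivBar f) := by
  have := hf.fderiv_right le_rfl
  unfold wirtingerDerivBar
  fun_prop

theorem fderiv_apply_eq_wirtingerDeriv (f : ℂ → E) (z w : ℂ) :
    fderiv ℝ f z w = w • wirtingerDeriv f z + conj w • wirtingerDerivBar f z := by
  have hw : fderiv ℝ f z w = (w.re : ℂ) • fderiv ℝ f z 1 + (w.im : ℂ) • fderiv ℝ f z I := by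
    conv_lhs => rw [show w = w.re • (1 : ℂ) + w.im • I by simp [re_add_im]]
    simp only [map_add, map_smul, coe_smul]
  have hre : (w.re : ℂ) = (w + conj w) / 2 := re_eq_add_conj w
  have him : (w.im : ℂ) = -I * (w - conj w) / 2 := by
    rw [im_eq_sub_conj]; field_simp; simp
  rw [hw, hre, him, wirtingerDeriv, wirtingerDerivBar]
  module

end Wirtinger

section AngularFourierCoeff

/-- The `m`-th angular Fourier coefficient of `φ` on the circle of radius `r`, without the
normalising factor `1 / (2π)`. -/
noncomputable def angularFourierCoeff (m : ℤ) (φ : ℂ → E) (r : ℝ) : E :=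
  ∫ θ in -π..π, exp (-(m * θ * I)) • φ (circleMap 0 r θ)

theorem integral_exp_neg_int_mul_I {m : ℤ} (hm : m ≠ 0) :
    ∫ θ in -π..π, exp (-(m * θ * I)) = 0 := by
  have hperiod : exp (-(m * I) * (π : ℝ)) = exp (-(m * I) * (-π : ℝ)) :=
    exp_eq_exp_iff_exists_int.2 ⟨-m, by push_cast; ring⟩
  calc
    ∫ θ in -π..π, exp (-(m * θ * I)) = ∫ θ in -π..π, exp (-(m * I) * θ) := by
      simp only [neg_mul, mul_right_comm]
    _ = 0 := by
      rw [integral_exp_mul_complex (by simp [hm, I_ne_zero]), hperiod, sub_self, zero_div]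

theorem continuous_angularFourierIntegrand (m : ℤ) {φ : ℂ → E} (hφ : Continuous φ) :
    Continuous (Function.uncurry fun r θ : ℝ ↦ exp (-(m * θ * I)) • φ (circleMap 0 r θ)) := by
  unfold Function.uncurry circleMap
  fun_prop

theorem continuous_angularFourierCoeff (m : ℤ) {φ : ℂ → E} (hφ : Continuous φ) :
    Continuous (angularFourierCoeff m φ) :=
  intervalIntegral.continuous_parametric_intervalIntegral_of_continuous'
    (continuous_angularFourierIntegrand m hφ) _ _

theorem angularFourierCoeff_zero_right [CompleteSpace E] {m : ℤ} (hm : m ≠ 0) (φ : ℂ → E) :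
    angularFourierCoeff m φ 0 = 0 := by
  simp only [angularFourierCoeff, circleMap_zero_radius, Function.const_apply]
  rw [intervalIntegral.integral_smul_const, integral_exp_neg_int_mul_I hm, zero_smul]

theorem hasDerivAt_angularFourierIntegrand (m : ℤ) {φ : ℂ → E} {r θ : ℝ}
    (hφ : DifferentiableAt ℝ φ (circleMap 0 r θ)) :
    HasDerivAt (fun r : ℝ ↦ exp (-(m * θ * I)) • φ (circleMap 0 r θ))
      (exp (-((m - 1 : ℤ) * θ * I)) • wirtingerDeriv φ (circleMap 0 r θ) +
        exp (-((m + 1 : ℤ) * θ * I)) • wirtingerDerivBar φ (circleMap 0 r θ)) r := by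
  have hradial : HasDerivAt (fun r : ℝ ↦ circleMap 0 r θ) (exp (θ * I)) r := by
    simpa [circleMap] using (ofRealCLM.hasDerivAt (x := r)).mul_const (exp (θ * I))
  have hchain := (hφ.hasFDerivAt.comp_hasDerivAt r hradial).const_smul (exp (-(m * θ * I)))
  convert! hchain using 1
  rw [fderiv_apply_eq_wirtingerDeriv, smul_add, smul_smul, smul_smul, ← exp_conj, ← exp_add,
    ← exp_add]
  congr 3
  · push_cast
    ring
  · simp only [Int.cast_add, Int.cast_one, map_mul, conj_ofReal, conj_I]
    ring

theorem hasDerivAt_angularFourierCoeff (m : ℤ) {φ : ℂ → E} (hφ : ContDiff ℝ 1 φ) (r : ℝ) :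
    HasDerivAt (angularFourierCoeff m φ)
      (angularFourierCoeff (m - 1) (wirtingerDeriv φ) r +
        angularFourierCoeff (m + 1) (wirtingerDerivBar φ) r) r := by
  have hd := continuous_angularFourierIntegrand (m - 1)
    (contDiff_wirtingerDeriv (n := 0) (by simpa using hφ)).continuous
  have hd' := continuous_angularFourierIntegrand (m + 1)
    (contDiff_wirtingerDerivBar (n := 0) (by simpa using hφ)).continuous
  simp only [angularFourierCoeff]
  rw [← intervalIntegral.integral_add ((hd.uncurry_left r).intervalIntegrable _ _)
    ((hd'.uncurry_left r).intervalIntegrable _ _)]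
  refine hasDerivAt_intervalIntegral_of_continuous
    (fun r ↦ (continuous_angularFourierIntegrand m hφ.continuous).uncurry_left r) ?_
    (fun _ _ ↦ hasDerivAt_angularFourierIntegrand m (hφ.differentiable one_ne_zero _)) _ _ r
  exact hd.add hd'

theorem angularFourierCoeff_isBigO_pow [CompleteSpace E] {n : ℕ} {m : ℤ} {φ : ℂ → E}
    (hφ : ContDiff ℝ n φ) (hn : n ≤ m.natAbs) : angularFourierCoeff m φ =O[𝓝 0] fun r ↦ r ^ n := by
  induction n generalizing m φ with
  | zero =>
    simpa using (continuous_angularFourierCoeff m hφ.continuous).continuousAt.isBigO_one ℝ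
  | succ n ih =>
    have hderiv : (fun r ↦ angularFourierCoeff (m - 1) (wirtingerDeriv φ) r +
        angularFourierCoeff (m + 1) (wirtingerDerivBar φ) r) =O[𝓝 0] fun r ↦ (r - 0) ^ n := by
      simpa only [sub_zero] using (ih (contDiff_wirtingerDeriv hφ) (by omega)).add
        (ih (contDiff_wirtingerDerivBar hφ) (by omega))
    have hφ₁ : ContDiff ℝ 1 φ := hφ.of_le (by simp)
    simpa only [sub_zero, angularFourierCoeff_zero_right (m := m) (by omega)] using
      isBigO_sub_pow_succ_of_hasDerivAt
        (.of_forall fun r ↦ hasDerivAt_angularFourierCoeff m hφ₁ r) hderiv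

theorem angularFourierCoeff_eventuallyEq_zero (m : ℤ) {φ : ℂ → E} (hφ : HasCompactSupport φ) :
    angularFourierCoeff m φ =ᶠ[atTop] 0 := by
  have hzero : ∀ᶠ r : ℝ in atTop, ∀ z : ℂ, ‖z‖ = r → φ z = 0 := by
    rw [← eventually_comap, comap_norm_atTop, Metric.cobounded_eq_cocompact,
      ← coclosedCompact_eq_cocompact]
    exact hasCompactSupport_iff_eventuallyEq.1 hφ
  filter_upwards [hzero, eventually_ge_atTop 0] with r hr hr₀
  have hcircle (θ : ℝ) : φ (circleMap 0 r θ) = 0 :=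
    hr _ (by rw [norm_circleMap_zero, abs_of_nonneg hr₀])
  simp [angularFourierCoeff, hcircle]

theorem differentiableAt_mellin_angularFourierCoeff [CompleteSpace E] {m : ℤ} {φ : ℂ → E}
    (hφ : ContDiff ℝ m.natAbs φ) (hsupp : HasCompactSupport φ) {s : ℂ}
    (hs : -(m.natAbs : ℝ) < s.re) : DifferentiableAt ℂ (mellin (angularFourierCoeff m φ)) s := by
  refine mellin_differentiableAt_of_isBigO_rpow
    ((continuous_angularFourierCoeff m hφ.continuous).locallyIntegrable.locallyIntegrableOn _)
    ((angularFourierCoeff_eventuallyEq_zero m hsupp).trans_isBigO (isBigO_zero _ _))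
    (lt_add_one s.re) ?_ hs
  simpa only [neg_neg, Real.rpow_natCast] using
    (angularFourierCoeff_isBigO_pow hφ le_rfl).mono nhdsWithin_le_nhds

end AngularFourierCoeff

section HomogeneousKernel

/-- The kernel `|z|^{2λ} z^{-k}`, which regularizes `1 / z^k` as `λ` varies. -/
noncomputable def homogeneousKernel (k : ℤ) (l z : ℂ) : ℂ :=
  ((‖z‖ ^ 2 : ℝ) : ℂ) ^ l * z ^ (-k)

theorem measurable_homogeneousKernel (k : ℤ) (l : ℂ) : Measurable (homogeneousKernel k l) := by
  unfold homogeneousKernel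
  fun_prop

theorem homogeneousKernel_circleMap (k : ℤ) (l : ℂ) {r : ℝ} (hr : 0 < r) (θ : ℝ) :
    homogeneousKernel k l (circleMap 0 r θ) = (r : ℂ) ^ (2 * l - k) * exp (-(k * θ * I)) := by
  have hr' : (r : ℂ) ≠ 0 := ofReal_ne_zero.2 hr.ne'
  have hsq : ((r ^ 2 : ℝ) : ℂ) ^ l = (r : ℂ) ^ (2 * l) := by
    rw [sq, ofReal_mul, mul_cpow_ofReal_nonneg hr.le hr.le, ← cpow_add _ _ hr', two_mul]
  rw [homogeneousKernel, norm_circleMap_zero, sq_abs, hsq, circleMap_zero_zpow, circleMap_zero,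
    cpow_sub _ _ hr', cpow_intCast]
  push_cast
  rw [zpow_neg, neg_mul, neg_mul]
  ring

theorem norm_homogeneousKernel (k : ℤ) (l : ℂ) {z : ℂ} (hz : z ≠ 0) :
    ‖homogeneousKernel k l z‖ = ‖z‖ ^ (2 * l.re - k) := by
  have hz' : 0 < ‖z‖ := norm_pos_iff.2 hz
  rw [homogeneousKernel, norm_mul, norm_cpow_eq_rpow_re_of_pos (by positivity), norm_zpow,
    Real.rpow_sub hz', Real.rpow_mul hz'.le, Real.rpow_two, Real.rpow_intCast, zpow_neg,
    div_eq_mul_inv]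

theorem locallyIntegrable_homogeneousKernel {k : ℤ} {l : ℂ} (hl : (k : ℝ) / 2 - 1 < l.re) :
    LocallyIntegrable (homogeneousKernel k l) := by
  refine locallyIntegrable_of_norm_le_rpow (C := 1) (α := k - 2 * l.re) (by simp)
    (by rw [finrank_real_complex]; push_cast; linarith) ?_
    (measurable_homogeneousKernel k l).aestronglyMeasurable
  filter_upwards [Measure.ae_ne volume 0] with z hz
  rw [norm_homogeneousKernel k l hz, neg_sub, one_mul]

theorem integral_homogeneousKernel_smul_eq_mellin {k : ℤ} {l : ℂ} {φ : ℂ → E}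
    (hint : Integrable fun z ↦ homogeneousKernel k l z • φ z) :
    ∫ z, homogeneousKernel k l z • φ z = mellin (angularFourierCoeff k φ) (2 * l - k + 2) := by
  rw [integral_eq_integral_Ioi_smul_integral_circleMap hint, mellin]
  refine setIntegral_congr_fun measurableSet_Ioi fun r hr ↦ ?_
  have hpow : (r : ℂ) ^ (2 * l - k + 2 - 1) = r * (r : ℂ) ^ (2 * l - k) := by
    rw [show 2 * l - k + 2 - 1 = 1 + (2 * l - k) by ring,
      cpow_add _ _ (ofReal_ne_zero.2 (ne_of_gt hr)), cpow_one]
  simp only [homogeneousKernel_circleMap k l hr, mul_smul, intervalIntegral.integral_smul, hpow,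
    angularFourierCoeff, coe_smul]

end HomogeneousKernel

theorem stmt7_general [CompleteSpace E] {φ : ℂ → E} {k : ℤ}
    (hφ : ContDiff ℝ k.natAbs φ) (hsupp : HasCompactSupport φ) :
    ∃ g : ℂ → E,
      DifferentiableOn ℂ g {l : ℂ | ((k : ℝ) - k.natAbs) / 2 - 1 < l.re} ∧
      ∀ l : ℂ, (k : ℝ) / 2 - 1 < l.re →
        Integrable (fun z : ℂ ↦ (((‖z‖ ^ 2 : ℝ) : ℂ) ^ l * z ^ (-k)) • φ z) ∧
        g l = ∫ z : ℂ, (((‖z‖ ^ 2 : ℝ) : ℂ) ^ l * z ^ (-k)) • φ z := by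
  refine ⟨fun l ↦ mellin (angularFourierCoeff k φ) (2 * l - k + 2), fun l hl ↦ ?_, fun l hl ↦ ?_⟩
  · have hs : -(k.natAbs : ℝ) < (2 * l - k + 2).re := by
      have hre : (2 * l - k + 2).re = 2 * l.re - k + 2 := by simp
      rw [mem_ofPred_eq] at hl
      linarith
    exact ((differentiableAt_mellin_angularFourierCoeff hφ hsupp hs).comp
      (f := fun l : ℂ ↦ 2 * l - k + 2) l (by fun_prop)).differentiableWithinAt
  · have hint : Integrable fun z ↦ homogeneousKernel k l z • φ z :=
      (locallyIntegrable_homogeneousKernel hl).integrable_smul_right_of_hasCompactSupport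
        hφ.continuous hsupp
    exact ⟨hint, (integral_homogeneousKernel_smul_eq_mellin hint).symm⟩

open MeasureTheory in
/-- `λ ↦ ∫_ℂ |z|^{2λ} z^{-k} φ(z) dA(z)`, defined for `Re λ > k/2`,
extends holomorphically to a half-plane `{Re λ > -δ}`. -/
theorem stmt7 (φ : ℂ → ℂ) (hφ : ContDiff ℝ (⊤ : ℕ∞) φ) (hsupp : HasCompactSupport φ)
    (k : ℕ) :
    ∃ δ > (0 : ℝ), ∃ g : ℂ → ℂ,
      DifferentiableOn ℂ g {l : ℂ | -δ < l.re} ∧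
      ∀ l : ℂ, (k : ℝ) / 2 < l.re →
        Integrable (fun z : ℂ => ((‖z‖ ^ 2 : ℝ) : ℂ) ^ l * z ^ (-(k : ℤ)) * φ z) ∧
        g l = ∫ z : ℂ, ((‖z‖ ^ 2 : ℝ) : ℂ) ^ l * z ^ (-(k : ℤ)) * φ z := by
  obtain ⟨g, hg, hgl⟩ := stmt7_general (k := k) (hφ.of_le (by exact_mod_cast le_top)) hsupp
  exact ⟨1, one_pos, g, by simpa using hg, fun l hl ↦ hgl l (by push_cast; linarith)⟩
end
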